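/- arXiv:0804.1882 — 10 statements merged into one kernel-verified Lean document; each statement's English description precedes it below -/
import Mathlib

section
/- Lemma 1 (reformulation in scale-invariant variables): Let λ, μ, ρ, p, p_T, q, m_g be differentiable functions on (0,∞) satisfying the Einstein equations (E1) and (E2), the Tolman–Oppenheimer–Volkov equation (TOV), and the relation e^{−2λ(r)} = 1 − 2m_g(r)/r + q(r)²/r². Define x(r) = 1 − e^{−2λ(r)}, y(r) = 8πr²p(r), z(r) = q(r)²/r², and for a function f let ḟ denote (r/2) df/dr (the derivative with respect to β = 2 log r). Then for all r > 0 with x(r) < 1: 8πr²ρ(r) = 2ẋ + x − z, 8πr²p(r) = y, and 8πr²p_T(r) = ((x + y − z)/(2(1−x)))ẋ + ẏ − ż − z + (x + y − z)²/(4(1−x)). -/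
noncomputable section

open Real

/-- The variable `x(r) = 1 − e^{−2λ(r)}`. -/
def xVar (lam : ℝ → ℝ) (r : ℝ) : ℝ := 1 - Real.exp (-2 * lam r)

/-- The variable `y(r) = 8πr²p(r)`. -/
def yVar (p : ℝ → ℝ) (r : ℝ) : ℝ := 8 * π * r ^ 2 * p r

/-- The variable `z(r) = q(r)²/r²`. -/
def zVar (q : ℝ → ℝ) (r : ℝ) : ℝ := (q r) ^ 2 / r ^ 2

/-- The derivative with respect to `β = 2 log r`: `ḟ(r) = (r/2) f'(r)`. -/
def betaDot (f : ℝ → ℝ) (r : ℝ) : ℝ := (r / 2) * deriv f r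

/-- **Lemma 1** (reformulation in scale-invariant variables): if `λ, μ, ρ, p,
p_T, q, m_g` are differentiable on `(0,∞)` and satisfy the Einstein equations
(E1), (E2), the TOV equation and `e^{−2λ} = 1 − 2m_g/r + q²/r²`, then in the
variables `x = 1 − e^{−2λ}`, `y = 8πr²p`, `z = q²/r²` one has
`8πr²ρ = 2ẋ + x − z`, `8πr²p = y` and
`8πr²p_T = ((x+y−z)/(2(1−x)))ẋ + ẏ − ż − z + (x+y−z)²/(4(1−x))`. -/
theorem scale_invariant_reformulation
    (lam mu rho p pT q mg : ℝ → ℝ)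
    (hlam : ∀ r > 0, DifferentiableAt ℝ lam r)
    (hmu : ∀ r > 0, DifferentiableAt ℝ mu r)
    (hrho : ∀ r > 0, DifferentiableAt ℝ rho r)
    (hp : ∀ r > 0, DifferentiableAt ℝ p r)
    (hpT : ∀ r > 0, DifferentiableAt ℝ pT r)
    (hq : ∀ r > 0, DifferentiableAt ℝ q r)
    (hmg : ∀ r > 0, DifferentiableAt ℝ mg r)
    (hE1 : ∀ r > 0,
      1 / r ^ 2 + 2 * deriv lam r * Real.exp (-2 * lam r) / r
          - Real.exp (-2 * lam r) / r ^ 2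
        = 8 * π * rho r + (q r) ^ 2 / r ^ 4)
    (hE2 : ∀ r > 0,
      1 / r ^ 2 - 2 * deriv mu r * Real.exp (-2 * lam r) / r
          - Real.exp (-2 * lam r) / r ^ 2
        = -(8 * π * p r) + (q r) ^ 2 / r ^ 4)
    (hTOV : ∀ r > 0,
      deriv p r =
        q r * deriv q r / (4 * π * r ^ 4) + (2 / r) * (pT r - p r)
          - (rho r + p r) * Real.exp (2 * lam r)
              * (mg r / r ^ 2 + 4 * π * r * p r - (q r) ^ 2 / r ^ 3))
    (hrel : ∀ r > 0,
      Real.exp (-2 * lam r) = 1 - 2 * mg r / r + (q r) ^ 2 / r ^ 2) :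
    ∀ r > 0, xVar lam r < 1 →
      (8 * π * r ^ 2 * rho r
          = 2 * betaDot (xVar lam) r + xVar lam r - zVar q r) ∧
      (8 * π * r ^ 2 * p r = yVar p r) ∧
      (8 * π * r ^ 2 * pT r
          = (xVar lam r + yVar p r - zVar q r) / (2 * (1 - xVar lam r))
                * betaDot (xVar lam) r
            + betaDot (yVar p) r - betaDot (zVar q) r - zVar q r
            + (xVar lam r + yVar p r - zVar q r) ^ 2
                / (4 * (1 - xVar lam r))) := by
  intro r hr _
  have hr0 : r ≠ 0 := hr.ne'
  have hpi : (π : ℝ) ≠ 0 := Real.pi_ne_zero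
  have dx : deriv (xVar lam) r = 2 * deriv lam r * Real.exp (-2 * lam r) := by
    have h := (((hlam r hr).hasDerivAt.const_mul (-2)).exp).const_sub 1
    have h2 : deriv (xVar lam) r = _ := h.deriv
    rw [h2]; ring
  have dy : deriv (yVar p) r = 16 * π * r * p r + 8 * π * r ^ 2 * deriv p r := by
    have h := (((hasDerivAt_id r).pow 2).const_mul (8 * π)).mul (hp r hr).hasDerivAt
    have h2 : deriv (yVar p) r = _ := h.deriv
    rw [h2]; simp only [Pi.pow_apply, id]; push_cast; ring
  have dz : deriv (zVar q) r = 2 * q r * deriv q r / r ^ 2 - 2 * (q r) ^ 2 / r ^ 3 := by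
    have h := ((hq r hr).hasDerivAt.pow 2).div ((hasDerivAt_id r).pow 2) (by simpa using hr0)
    have h2 : deriv (zVar q) r = _ := h.deriv
    rw [h2]; simp; field_simp
  have e1 := hE1 r hr
  have e3 := hTOV r hr
  have e4 := hrel r hr
  have hEi : Real.exp (2 * lam r) = (Real.exp (-2 * lam r))⁻¹ := by
    rw [← Real.exp_neg]; ring_nf
  have hE0 : Real.exp (-2 * lam r) ≠ 0 := (Real.exp_pos _).ne'
  rw [hEi] at e3
  unfold betaDot
  rw [dx, dy, dz]
  unfold xVar yVar zVar
  generalize Real.exp (-2 * lam r) = E at *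
  generalize deriv lam r = dl at *
  have hmgEq : mg r = r * (1 - E + (q r) ^ 2 / r ^ 2) / 2 := by
    rw [e4]; field_simp; ring
  have hrhoEq : rho r = (1 / r ^ 2 + 2 * dl * E / r - E / r ^ 2 - (q r) ^ 2 / r ^ 4) / (8 * π) := by
    rw [e1]; field_simp; ring
  refine ⟨?_, rfl, ?_⟩
  · rw [hrhoEq]; field_simp; ring
  · rw [e3, hmgEq, hrhoEq, sub_sub_cancel]
    field_simp
    ring
end
end

section
/- Optimization lemma: for all real numbers x and s with 0 ≤ x ≤ 1, s ≥ −1, and 3x² − 2x + s² + 2s ≤ 0, one has (3(1 − x) + 1 + s)² ≤ 16(1 − x). Moreover, if 0 ≤ x < 1, then equality holds if and only if x = 0 and s = 0. -/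
/-- **Optimization lemma**: for all reals `x, s` with `0 ≤ x ≤ 1`, `s ≥ −1`
and `α(x,s) = 3x² − 2x + s² + 2s ≤ 0`, one has
`(3(1 − x) + 1 + s)² ≤ 16(1 − x)`; moreover if `x < 1` then equality holds
if and only if `x = 0` and `s = 0`. -/
theorem optimization_lemma (x s : ℝ) (hx0 : 0 ≤ x) (hx1 : x ≤ 1)
    (hs : -1 ≤ s) (hα : 3 * x ^ 2 - 2 * x + s ^ 2 + 2 * s ≤ 0) :
    (3 * (1 - x) + 1 + s) ^ 2 ≤ 16 * (1 - x) ∧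
    (x < 1 →
      ((3 * (1 - x) + 1 + s) ^ 2 = 16 * (1 - x) ↔ x = 0 ∧ s = 0)) := by
  have key : 16 * (1 - x) - (3 * (1 - x) + 1 + s) ^ 2
      = 4 * (-(3 * x ^ 2 - 2 * x + s ^ 2 + 2 * s)) + 3 * (x + s) ^ 2 := by ring
  have hsq := sq_nonneg (x + s)
  refine ⟨by linarith, fun hlt => ⟨fun h => ?_, ?_⟩⟩
  · have h0 : (x + s) ^ 2 = 0 := by linarith
    have hα0 : 3 * x ^ 2 - 2 * x + s ^ 2 + 2 * s = 0 := by linarith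
    have hsx : s = -x := by
      have := pow_eq_zero_iff (two_ne_zero) |>.mp h0
      linarith
    subst hsx
    have h1 : x * (1 - x) = 0 := by linarith
    rcases mul_eq_zero.mp h1 with h2 | h2
    · exact ⟨h2, by linarith⟩
    · exfalso; linarith
  · rintro ⟨rfl, rfl⟩
    norm_num
end

section
/- Along the upper branch of the constraint curve α = 0, the quantity w equals (3√(1−x) + √(1+3x))²; consequently, for every x ∈ [0,1] one has (3√(1−x) + √(1+3x))² ≤ 16, with equality if and only if x = 0. -/
/-- Along the upper branch `s = −1 + √((1−x)(1+3x))` of the constraint curve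
`α(x,s) = 3x² − 2x + s² + 2s = 0`, the quantity
`w(x,s) = (3(1−x) + 1 + s)²/(1−x)` equals `(3√(1−x) + √(1+3x))²`;
consequently, for every `x ∈ [0,1]` one has `(3√(1−x) + √(1+3x))² ≤ 16`,
with equality if and only if `x = 0`. -/
theorem upper_branch_value (x : ℝ) (hx0 : 0 ≤ x) (hx1 : x ≤ 1) :
    (x < 1 →
      (3 * (1 - x) + 1 + (-1 + Real.sqrt ((1 - x) * (1 + 3 * x)))) ^ 2
          / (1 - x)
        = (3 * Real.sqrt (1 - x) + Real.sqrt (1 + 3 * x)) ^ 2) ∧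
    (3 * Real.sqrt (1 - x) + Real.sqrt (1 + 3 * x)) ^ 2 ≤ 16 ∧
    ((3 * Real.sqrt (1 - x) + Real.sqrt (1 + 3 * x)) ^ 2 = 16 ↔ x = 0) := by
  have h1 : 0 ≤ 1 - x := by linarith
  have h2 : 0 ≤ 1 + 3 * x := by linarith
  rw [Real.sqrt_mul h1]
  have ha := Real.sq_sqrt h1
  have hb := Real.sq_sqrt h2
  have ha0 := Real.sqrt_nonneg (1 - x)
  have hb0 := Real.sqrt_nonneg (1 + 3 * x)
  generalize Real.sqrt (1 - x) = a at *
  generalize Real.sqrt (1 + 3 * x) = b at *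
  have hab : 0 ≤ a * b := mul_nonneg ha0 hb0
  have hp : (a * b) ^ 2 = (1 - x) * (1 + 3 * x) := by rw [mul_pow, ha, hb]
  have he : (3 * a + b) ^ 2 = 10 - 6 * x + 6 * (a * b) := by
    linear_combination 9 * ha + hb
  refine ⟨fun hlt => ?_, ?_, ?_, ?_⟩
  · have hne : 1 - x ≠ 0 := by linarith
    rw [div_eq_iff hne, ← ha]
    ring
  · have : a * b ≤ 1 + x := abs_le_of_sq_le_sq' (by nlinarith) (by linarith) |>.2
    linarith
  · intro h
    have h3 : a * b = 1 + x := by linarith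
    rw [h3] at hp
    have : x ^ 2 = 0 := by linarith
    exact pow_eq_zero_iff (two_ne_zero) |>.1 this
  · rintro rfl
    have h3 : a * b = 1 := by nlinarith
    linarith
end

section
/- Monotonicity of w along solution curves: let x, y, z : ℝ → ℝ be differentiable at β with x(β) < 1, set s = y − z and w(β) = (3(1 − x(β)) + 1 + s(β))²/(1 − x(β)). Then w'(β) = ((4 − 3x + s)/(1 − x)²)·[(3x − 2 + s)x'(β) + 2(1 − x)(y'(β) − z'(β))]. Consequently, if furthermore 0 ≤ x(β), s(β) ≥ −1, y(β) ≥ 0, and (3x − 2 + s)x'(β) + 2(1 − x)(y'(β) − z'(β)) ≤ −α(x(β), s(β))/2, then w'(β) ≤ −((4 − 3x + s)/(2(1 − x)²))·α(x(β), s(β)); in particular w'(β) < 0 whenever α(x(β), s(β)) > 0. -/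
/-- **Monotonicity of `w` along solution curves**: let `x, y, z` be
differentiable at `β` with `x(β) < 1`, and set `s = y − z`,
`w = (3(1 − x) + 1 + s)²/(1 − x)`. Then
`w' = ((4 − 3x + s)/(1 − x)²)·[(3x − 2 + s)x' + 2(1 − x)(y' − z')]`;
consequently, if `0 ≤ x`, `s ≥ −1`, `y ≥ 0` and
`(3x − 2 + s)x' + 2(1 − x)(y' − z') ≤ −α(x,s)/2` where
`α(x,s) = 3x² − 2x + s² + 2s`, then
`w' ≤ −((4 − 3x + s)/(2(1 − x)²))·α(x,s)`; in particular `w' < 0`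
whenever `α(x,s) > 0`. -/
theorem w_monotone (x y z : ℝ → ℝ) (β : ℝ)
    (hx : DifferentiableAt ℝ x β) (hy : DifferentiableAt ℝ y β)
    (hz : DifferentiableAt ℝ z β) (hx1 : x β < 1) :
    deriv (fun t => (3 * (1 - x t) + 1 + (y t - z t)) ^ 2 / (1 - x t)) β
      = (4 - 3 * x β + (y β - z β)) / (1 - x β) ^ 2 *
          ((3 * x β - 2 + (y β - z β)) * deriv x β
            + 2 * (1 - x β) * (deriv y β - deriv z β)) ∧
    (0 ≤ x β → -1 ≤ y β - z β → 0 ≤ y β →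
      (3 * x β - 2 + (y β - z β)) * deriv x β
          + 2 * (1 - x β) * (deriv y β - deriv z β)
        ≤ -(3 * (x β) ^ 2 - 2 * x β + (y β - z β) ^ 2 + 2 * (y β - z β)) / 2 →
      (deriv (fun t => (3 * (1 - x t) + 1 + (y t - z t)) ^ 2 / (1 - x t)) β
          ≤ -((4 - 3 * x β + (y β - z β)) / (2 * (1 - x β) ^ 2)) *
              (3 * (x β) ^ 2 - 2 * x β + (y β - z β) ^ 2 + 2 * (y β - z β)) ∧
        (0 < 3 * (x β) ^ 2 - 2 * x β + (y β - z β) ^ 2 + 2 * (y β - z β) →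
          deriv (fun t => (3 * (1 - x t) + 1 + (y t - z t)) ^ 2 / (1 - x t)) β
            < 0))) := by
  have hu : (1 - x β) ≠ 0 := by linarith
  have hd : HasDerivAt (fun t => (3 * (1 - x t) + 1 + (y t - z t)) ^ 2 / (1 - x t)) _ β :=
    ((((((hx.hasDerivAt.const_sub 1).const_mul 3).add_const 1).add
      (hy.hasDerivAt.sub hz.hasDerivAt)).pow 2).div (hx.hasDerivAt.const_sub 1) hu)
  have key : deriv (fun t => (3 * (1 - x t) + 1 + (y t - z t)) ^ 2 / (1 - x t)) β
      = (4 - 3 * x β + (y β - z β)) / (1 - x β) ^ 2 *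
          ((3 * x β - 2 + (y β - z β)) * deriv x β
            + 2 * (1 - x β) * (deriv y β - deriv z β)) := by
    rw [hd.deriv]
    simp only [Pi.add_apply, Pi.sub_apply, Pi.pow_apply]
    field_simp
    push_cast
    ring
  refine ⟨key, ?_⟩
  intro _ hs _ hle
  rw [key]
  have hN : 0 < 4 - 3 * x β + (y β - z β) := by linarith
  have hu2 : 0 < (1 - x β) ^ 2 := by positivity
  have hc := div_pos hN hu2
  have e : (4 - 3 * x β + (y β - z β)) / (2 * (1 - x β) ^ 2)
      = (4 - 3 * x β + (y β - z β)) / (1 - x β) ^ 2 / 2 := by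
    field_simp
  have hm := mul_le_mul_of_nonneg_left hle hc.le
  refine ⟨?_, fun ha => ?_⟩
  · rw [e]
    linarith
  · exact mul_neg_of_pos_of_neg hc (by linarith)
end

section
/- Consistency with the horizon: let m, q, r be real numbers with r > 0, m ≥ 0 and q² < r². If √m ≤ √r/3 + √(r/9 + q²/(3r)), then 1 − 2m/r + q²/r² > 0. -/
/-- **Consistency with the horizon**: for reals `m, q, r` with `r > 0`,
`m ≥ 0` and `q² < r²`, the bound `√m ≤ √r/3 + √(r/9 + q²/(3r))` implies
`1 − 2m/r + q²/r² > 0`. -/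
theorem horizon_consistency (m q r : ℝ) (hr : 0 < r) (hm : 0 ≤ m)
    (hq : q ^ 2 < r ^ 2)
    (h : Real.sqrt m ≤ Real.sqrt r / 3 + Real.sqrt (r / 9 + q ^ 2 / (3 * r))) :
    0 < 1 - 2 * m / r + q ^ 2 / r ^ 2 := by
  have hy : q ^ 2 / r < r := by
    rw [div_lt_iff₀ hr]; nlinarith
  have hy0 : 0 ≤ q ^ 2 / r := by positivity
  have e1 : q ^ 2 / (3 * r) = (q ^ 2 / r) / 3 := by field_simp
  have e2 : 1 - 2 * m / r + q ^ 2 / r ^ 2 = (r - 2 * m + q ^ 2 / r) / r := by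
    field_simp
  rw [e2]
  rw [e1] at h
  generalize q ^ 2 / r = y at *
  apply div_pos _ hr
  have hs := Real.sq_sqrt hr.le
  have hs0 := Real.sqrt_nonneg r
  have ht := Real.sq_sqrt (show 0 ≤ r / 9 + y / 3 by positivity)
  have ht0 := Real.sqrt_nonneg (r / 9 + y / 3)
  have hm2 := Real.sq_sqrt hm
  have hm0 := Real.sqrt_nonneg m
  generalize Real.sqrt (r / 9 + y / 3) = t at *
  generalize Real.sqrt r = s at *
  generalize Real.sqrt m = w at *
  have hlt : t < 2 * s / 3 := by
    apply lt_of_pow_lt_pow_left₀ 2 (by positivity)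
    nlinarith
  have hw : w ^ 2 ≤ (s / 3 + t) ^ 2 := pow_le_pow_left₀ hm0 h 2
  have hp : 0 < (2 * s / 3 - t) ^ 2 := pow_pos (by linarith) 2
  nlinarith
end

section
/- Derivative of w along the curve γ_ε: let ε ∈ (0,1) and let x, s : ℝ → ℝ be differentiable functions of τ with 0 ≤ x(τ) < 1, s(τ) > −1, (3 − 3ε)(1 − x(τ)) + 1 + s(τ) > 0, and satisfying the constraint ((3 − 3ε)(1 − x(τ)) + 1 + s(τ))²/(1 − x(τ)) = (ε√(1 + 3x(τ)) + 4(1 − ε))² for all τ. Then w(τ) := (3(1 − x(τ)) + 1 + s(τ))²/(1 − x(τ)) satisfies w'(τ) = (3ε(4 − 3x + s)/(1 − x))·((√(1 − x) − √(1 + 3x))/√(1 + 3x))·x'(τ). In particular, if x(τ) > 0 and x'(τ) > 0 then w'(τ) < 0. -/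
/-- **Derivative of `w` along the curve `γ_ε`**: let `ε ∈ (0,1)` and let
`x, s : ℝ → ℝ` be differentiable with `0 ≤ x < 1`, `s > −1`,
`(3 − 3ε)(1 − x) + 1 + s > 0`, satisfying the constraint
`w_ε(x,s) = ((3 − 3ε)(1 − x) + 1 + s)²/(1 − x) = (ε√(1+3x) + 4(1−ε))²`.
Then `w = (3(1 − x) + 1 + s)²/(1 − x)` satisfies
`w' = (3ε(4 − 3x + s)/(1 − x))·((√(1−x) − √(1+3x))/√(1+3x))·x'`;
in particular `w' < 0` wherever `x > 0` and `x' > 0`. -/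
theorem w_deriv_along_gamma_eps (ε : ℝ) (hε0 : 0 < ε) (hε1 : ε < 1)
    (x s : ℝ → ℝ) (hx : Differentiable ℝ x) (hs : Differentiable ℝ s)
    (hx0 : ∀ τ, 0 ≤ x τ) (hx1 : ∀ τ, x τ < 1) (hsb : ∀ τ, -1 < s τ)
    (hpos : ∀ τ, 0 < (3 - 3 * ε) * (1 - x τ) + 1 + s τ)
    (hconstraint : ∀ τ,
      ((3 - 3 * ε) * (1 - x τ) + 1 + s τ) ^ 2 / (1 - x τ)
        = (ε * Real.sqrt (1 + 3 * x τ) + 4 * (1 - ε)) ^ 2) :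
    ∀ τ,
      deriv (fun t => (3 * (1 - x t) + 1 + s t) ^ 2 / (1 - x t)) τ
        = 3 * ε * (4 - 3 * x τ + s τ) / (1 - x τ) *
            ((Real.sqrt (1 - x τ) - Real.sqrt (1 + 3 * x τ))
              / Real.sqrt (1 + 3 * x τ)) * deriv x τ ∧
      (0 < x τ → 0 < deriv x τ →
        deriv (fun t => (3 * (1 - x t) + 1 + s t) ^ 2 / (1 - x t)) τ < 0) := by
  have key : ∀ t, 3 * (1 - x t) + 1 + s t = Real.sqrt (1 - x t) *
      (ε * Real.sqrt (1 + 3 * x t) + 4 * (1 - ε) + 3 * ε * Real.sqrt (1 - x t)) := by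
    intro t
    have h1 : 0 < 1 - x t := by linarith [hx1 t]
    have ha := Real.sqrt_pos.mpr h1
    have ha2 := Real.sq_sqrt h1.le
    have hb := Real.sqrt_nonneg (1 + 3 * x t)
    have hc := hconstraint t
    rw [div_eq_iff h1.ne'] at hc
    set a := Real.sqrt (1 - x t)
    set b := Real.sqrt (1 + 3 * x t)
    have hB : 0 ≤ a * (ε * b + 4 * (1 - ε)) := by
      have : 0 < 1 - ε := by linarith
      positivity
    have hc' : ((3 - 3 * ε) * (1 - x t) + 1 + s t) ^ 2 = (a * (ε * b + 4 * (1 - ε))) ^ 2 := by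
      rw [hc, mul_pow, ha2]; ring
    have := (sq_eq_sq₀ (hpos t).le hB).mp hc'
    linear_combination this - 3 * ε * ha2
  have hfun : (fun t => (3 * (1 - x t) + 1 + s t) ^ 2 / (1 - x t)) = fun t =>
      (ε * Real.sqrt (1 + 3 * x t) + 4 * (1 - ε) + 3 * ε * Real.sqrt (1 - x t)) ^ 2 := by
    funext t
    have h1 : 0 < 1 - x t := by linarith [hx1 t]
    rw [key t, mul_pow, Real.sq_sqrt h1.le]
    field_simp
  intro τ
  have h1 : 0 < 1 - x τ := by linarith [hx1 τ]
  have h2 : 0 < 1 + 3 * x τ := by linarith [hx0 τ]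
  have ha := Real.sqrt_pos.mpr h1
  have hb := Real.sqrt_pos.mpr h2
  have hd := (hx τ).hasDerivAt
  have hda := (hd.const_sub 1).sqrt h1.ne'
  have hdb := ((hd.const_mul 3).const_add 1).sqrt h2.ne'
  have hW := (((hdb.const_mul ε).add_const (4 * (1 - ε))).add (hda.const_mul (3 * ε))).pow 2
  have main : deriv (fun t => (3 * (1 - x t) + 1 + s t) ^ 2 / (1 - x t)) τ
        = 3 * ε * (4 - 3 * x τ + s τ) / (1 - x τ) *
            ((Real.sqrt (1 - x τ) - Real.sqrt (1 + 3 * x τ))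
              / Real.sqrt (1 + 3 * x τ)) * deriv x τ := by
    rw [hfun]
    refine (HasDerivAt.deriv hW).trans ?_
    have hk := key τ
    have e : 4 - 3 * x τ + s τ = 3 * (1 - x τ) + 1 + s τ := by ring
    have ha2 := Real.sq_sqrt h1.le
    rw [e, hk]
    simp only [Pi.add_apply]
    generalize Real.sqrt (1 - x τ) = a at *
    generalize Real.sqrt (1 + 3 * x τ) = b at *
    rw [← ha2]
    field_simp
    norm_num
    ring
  refine ⟨main, fun hxp hdp => ?_⟩
  rw [main]
  have hlt : Real.sqrt (1 - x τ) < Real.sqrt (1 + 3 * x τ) :=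
    Real.sqrt_lt_sqrt h1.le (by linarith)
  have hn : (Real.sqrt (1 - x τ) - Real.sqrt (1 + 3 * x τ)) / Real.sqrt (1 + 3 * x τ) < 0 :=
    div_neg_of_neg_of_pos (by linarith) hb
  have h4 : 0 < 4 - 3 * x τ + s τ := by linarith [hsb τ]
  have hp : 0 < 3 * ε * (4 - 3 * x τ + s τ) / (1 - x τ) := by positivity
  exact mul_neg_of_neg_of_pos (mul_neg_of_pos_of_neg hp hn) hdp
end

section
/- Positivity of the tangential pressure term along γ₀: for every real s with −1 < s ≤ 0, setting x = (4 + 3s)/9 + (4/3)√(1/9 − s/3), one has 0 ≤ x < 1 and s + (x + s)²/(4(1 − x)) = s + 4(1/3 + √(1/9 − s/3))² ≥ s + 16/9 > 0. -/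
/-- **Positivity of the tangential pressure term along `γ₀`**: for every real
`s` with `−1 < s ≤ 0`, setting `x = (4 + 3s)/9 + (4/3)√(1/9 − s/3)`, one has
`0 ≤ x < 1` and
`s + (x + s)²/(4(1 − x)) = s + 4(1/3 + √(1/9 − s/3))² ≥ s + 16/9 > 0`. -/
theorem pT_positive_along_gamma0 (s : ℝ) (hs1 : -1 < s) (hs0 : s ≤ 0) :
    0 ≤ (4 + 3 * s) / 9 + (4 / 3) * Real.sqrt (1 / 9 - s / 3) ∧
    (4 + 3 * s) / 9 + (4 / 3) * Real.sqrt (1 / 9 - s / 3) < 1 ∧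
    s + ((4 + 3 * s) / 9 + (4 / 3) * Real.sqrt (1 / 9 - s / 3) + s) ^ 2
        / (4 * (1 - ((4 + 3 * s) / 9 + (4 / 3) * Real.sqrt (1 / 9 - s / 3))))
      = s + 4 * (1 / 3 + Real.sqrt (1 / 9 - s / 3)) ^ 2 ∧
    s + 16 / 9 ≤ s + 4 * (1 / 3 + Real.sqrt (1 / 9 - s / 3)) ^ 2 ∧
    0 < s + 16 / 9 := by
  have h0 : 0 ≤ 1 / 9 - s / 3 := by linarith
  have hsq := Real.sq_sqrt h0
  have ht0 := Real.sqrt_nonneg (1 / 9 - s / 3)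
  set t := Real.sqrt (1 / 9 - s / 3) with ht
  clear_value t
  have hs : s = 1 / 3 - 3 * t ^ 2 := by linarith
  have h1 : 1 / 3 ≤ t := by nlinarith
  have h2 : t < 2 / 3 := by nlinarith
  have hx : 1 - ((4 + 3 * s) / 9 + (4 / 3) * t) = (2 / 3 - t) ^ 2 := by
    rw [hs]; ring
  have hxs : (4 + 3 * s) / 9 + (4 / 3) * t + s = 4 * (2 / 3 - t) * (1 / 3 + t) := by
    rw [hs]; ring
  have hpos : 0 < 2 / 3 - t := by linarith
  refine ⟨by linarith, ?_, ?_, by nlinarith, by linarith⟩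
  · have := pow_pos hpos 2
    linarith
  · rw [hx, hxs]
    have hne := hpos.ne'
    congr 1
    rw [div_eq_iff (by positivity)]
    ring
end

section
/- Derivative of w along the curve h_ε: let x, s : ℝ → ℝ be differentiable functions of τ with x(τ) < 1, x(τ) + s(τ) > 0, and s'(τ)(s(τ) + x(τ)) = 2s(τ)x'(τ) for all τ (the ODE ds/dx = 2s/(s + x)). Set w(τ) = (3(1 − x(τ)) + 1 + s(τ))²/(1 − x(τ)) and α(τ) = 3x(τ)² − 2x(τ) + s(τ)² + 2s(τ). Then (x(τ) + s(τ))·w'(τ) = α(τ)·((3(1 − x(τ)) + 1 + s(τ))/(1 − x(τ))²)·x'(τ); in particular, wherever α ≠ 0, (1/α)w'(τ) = ((3(1 − x) + 1 + s)/((x + s)(1 − x)²))·x'(τ), which is negative whenever x'(τ) < 0. -/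
/-- **Derivative of `w` along the curve `h_ε`**: let `x, s : ℝ → ℝ` be
differentiable with `x < 1`, `x + s > 0`, satisfying the ODE
`s'(s + x) = 2s·x'` (i.e. `ds/dx = 2s/(s + x)`). Setting
`w = (3(1 − x) + 1 + s)²/(1 − x)` and `α = 3x² − 2x + s² + 2s`, one has
`(x + s)·w' = α·((3(1 − x) + 1 + s)/(1 − x)²)·x'`; in particular, wherever
`α ≠ 0`, `(1/α)·w' = ((3(1 − x) + 1 + s)/((x + s)(1 − x)²))·x'`, which is
negative whenever `x' < 0`. -/
theorem w_deriv_along_h_eps (x s : ℝ → ℝ)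
    (hx : Differentiable ℝ x) (hs : Differentiable ℝ s)
    (hx1 : ∀ τ, x τ < 1) (hxs : ∀ τ, 0 < x τ + s τ)
    (hode : ∀ τ, deriv s τ * (s τ + x τ) = 2 * s τ * deriv x τ) :
    ∀ τ,
      (x τ + s τ) *
          deriv (fun t => (3 * (1 - x t) + 1 + s t) ^ 2 / (1 - x t)) τ
        = (3 * (x τ) ^ 2 - 2 * x τ + (s τ) ^ 2 + 2 * s τ) *
            ((3 * (1 - x τ) + 1 + s τ) / (1 - x τ) ^ 2) * deriv x τ ∧
      (3 * (x τ) ^ 2 - 2 * x τ + (s τ) ^ 2 + 2 * s τ ≠ 0 →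
        (1 / (3 * (x τ) ^ 2 - 2 * x τ + (s τ) ^ 2 + 2 * s τ)) *
            deriv (fun t => (3 * (1 - x t) + 1 + s t) ^ 2 / (1 - x t)) τ
          = (3 * (1 - x τ) + 1 + s τ) / ((x τ + s τ) * (1 - x τ) ^ 2) *
              deriv x τ ∧
        (deriv x τ < 0 →
          (1 / (3 * (x τ) ^ 2 - 2 * x τ + (s τ) ^ 2 + 2 * s τ)) *
              deriv (fun t => (3 * (1 - x t) + 1 + s t) ^ 2 / (1 - x t)) τ
            < 0)) := by
  intro τ
  have h1 : 0 < 1 - x τ := by linarith [hx1 τ]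
  have h2 := hxs τ
  have hN : 0 < 3 * (1 - x τ) + 1 + s τ := by linarith
  have hd : deriv (fun t => (3 * (1 - x t) + 1 + s t) ^ 2 / (1 - x t)) τ
      = (3 * (1 - x τ) + 1 + s τ) *
        ((3 * x τ - 2 + s τ) * deriv x τ + 2 * deriv s τ * (1 - x τ)) / (1 - x τ) ^ 2 := by
    have hX := (hx τ).hasDerivAt
    have hS := (hs τ).hasDerivAt
    have hD := hX.const_sub 1
    have h := ((((hD.const_mul 3).add_const 1).add hS).pow 2).div hD h1.ne'
    refine (h.congr_deriv ?_).deriv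
    congr 1
    simp only [Pi.add_apply, Pi.pow_apply]
    push_cast
    ring
  have hA : (x τ + s τ) *
          deriv (fun t => (3 * (1 - x t) + 1 + s t) ^ 2 / (1 - x t)) τ
        = (3 * (x τ) ^ 2 - 2 * x τ + (s τ) ^ 2 + 2 * s τ) *
            ((3 * (1 - x τ) + 1 + s τ) / (1 - x τ) ^ 2) * deriv x τ := by
    rw [hd]
    have key : (x τ + s τ) *
        ((3 * x τ - 2 + s τ) * deriv x τ + 2 * deriv s τ * (1 - x τ))
        = (3 * (x τ) ^ 2 - 2 * x τ + (s τ) ^ 2 + 2 * s τ) * deriv x τ := by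
      linear_combination 2 * (1 - x τ) * hode τ
    linear_combination ((3 * (1 - x τ) + 1 + s τ) / (1 - x τ) ^ 2) * key
  refine ⟨hA, fun hα => ?_⟩
  have hB : (1 / (3 * (x τ) ^ 2 - 2 * x τ + (s τ) ^ 2 + 2 * s τ)) *
            deriv (fun t => (3 * (1 - x t) + 1 + s t) ^ 2 / (1 - x t)) τ
          = (3 * (1 - x τ) + 1 + s τ) / ((x τ + s τ) * (1 - x τ) ^ 2) *
              deriv x τ := by
    generalize deriv (fun t => (3 * (1 - x t) + 1 + s t) ^ 2 / (1 - x t)) τ = W at hA ⊢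
    generalize 3 * (x τ) ^ 2 - 2 * x τ + (s τ) ^ 2 + 2 * s τ = a at hA hα ⊢
    generalize 3 * (1 - x τ) + 1 + s τ = N at hA ⊢
    generalize 1 - x τ = d at hA h1 ⊢
    generalize x τ + s τ = c at hA h2 ⊢
    have hW : W = a * (N / d ^ 2) * deriv x τ / c := by
      rw [← hA]; field_simp
    rw [hW]
    field_simp
  refine ⟨hB, fun hneg => ?_⟩
  rw [hB]
  exact mul_neg_of_pos_of_neg (by positivity) hneg
end

section
/- Fundamental derivative identity from the TOV equation: let m_g, p, q, μ, ρ, p_T : (0,∞) → ℝ be differentiable and define λ by e^{−2λ(r)} = 1 − 2m_g(r)/r + q(r)²/r², assumed positive for all r > 0. Suppose for all r > 0: μ'(r) = (m_g(r)/r² + 4πr p(r) − q(r)²/r³)e^{2λ(r)}, m_g'(r) = 4πr²ρ(r) + q(r)q'(r)/r, and p'(r) = q(r)q'(r)/(4πr⁴) + (2/r)(p_T(r) − p(r)) − (ρ(r) + p(r))e^{2λ(r)}(m_g(r)/r² + 4πr p(r) − q(r)²/r³). Then the function ψ(r) := (m_g(r) + 4πr³p(r) − q(r)²/r)e^{(μ+λ)(r)}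 satisfies ψ'(r) = e^{(μ+λ)(r)}(4πr²(ρ(r) + p(r) + 2p_T(r)) + q(r)²/r²) for all r > 0. -/
noncomputable section

open Real

/-- The metric coefficient `λ` defined by `e^{−2λ} = 1 − 2m_g/r + q²/r²`. -/
def lamOf (mg q : ℝ → ℝ) (r : ℝ) : ℝ :=
  -Real.log (1 - 2 * mg r / r + (q r) ^ 2 / r ^ 2) / 2

/-- **Fundamental derivative identity from the TOV equation**: let
`m_g, p, q, μ, ρ, p_T` be differentiable on `(0,∞)` and let `λ` be defined by
`e^{−2λ} = 1 − 2m_g/r + q²/r²` (assumed positive). If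
`μ' = (m_g/r² + 4πrp − q²/r³)e^{2λ}`, `m_g' = 4πr²ρ + qq'/r` and the TOV
equation holds, then `ψ = (m_g + 4πr³p − q²/r)e^{μ+λ}` satisfies
`ψ' = e^{μ+λ}(4πr²(ρ + p + 2p_T) + q²/r²)` for all `r > 0`. -/
theorem fundamental_derivative_identity (mg p q mu rho pT : ℝ → ℝ)
    (hmg : ∀ r > 0, DifferentiableAt ℝ mg r)
    (hp : ∀ r > 0, DifferentiableAt ℝ p r)
    (hq : ∀ r > 0, DifferentiableAt ℝ q r)
    (hmu : ∀ r > 0, DifferentiableAt ℝ mu r)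
    (hrho : ∀ r > 0, DifferentiableAt ℝ rho r)
    (hpT : ∀ r > 0, DifferentiableAt ℝ pT r)
    (hpos : ∀ r > 0, 0 < 1 - 2 * mg r / r + (q r) ^ 2 / r ^ 2)
    (hmu' : ∀ r > 0, deriv mu r
      = (mg r / r ^ 2 + 4 * π * r * p r - (q r) ^ 2 / r ^ 3)
          * Real.exp (2 * lamOf mg q r))
    (hmg' : ∀ r > 0, deriv mg r
      = 4 * π * r ^ 2 * rho r + q r * deriv q r / r)
    (hTOV : ∀ r > 0, deriv p r
      = q r * deriv q r / (4 * π * r ^ 4) + (2 / r) * (pT r - p r)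
        - (rho r + p r) * Real.exp (2 * lamOf mg q r)
            * (mg r / r ^ 2 + 4 * π * r * p r - (q r) ^ 2 / r ^ 3)) :
    ∀ r > 0,
      deriv (fun t => (mg t + 4 * π * t ^ 3 * p t - (q t) ^ 2 / t)
          * Real.exp (mu t + lamOf mg q t)) r
        = Real.exp (mu r + lamOf mg q r)
            * (4 * π * r ^ 2 * (rho r + p r + 2 * pT r)
                + (q r) ^ 2 / r ^ 2) := by
  intro r hr
  have hr0 : r ≠ 0 := ne_of_gt hr
  have hF := hpos r hr
  have hF0 := hF.ne'
  have hE : Real.exp (2 * lamOf mg q r) = (1 - 2 * mg r / r + (q r) ^ 2 / r ^ 2)⁻¹ := by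
    unfold lamOf
    rw [show 2 * (-Real.log (1 - 2 * mg r / r + (q r) ^ 2 / r ^ 2) / 2)
      = -Real.log (1 - 2 * mg r / r + (q r) ^ 2 / r ^ 2) by ring, Real.exp_neg, Real.exp_log hF]
  have dm := (hmg r hr).hasDerivAt
  have dp := (hp r hr).hasDerivAt
  have dq := (hq r hr).hasDerivAt
  have dmu := (hmu r hr).hasDerivAt
  have did := hasDerivAt_id' r
  have dF : HasDerivAt (fun t => 1 - 2 * mg t / t + (q t) ^ 2 / t ^ 2)
      (-2 * deriv mg r / r + 2 * mg r / r ^ 2 + 2 * q r * deriv q r / r ^ 2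
        - 2 * (q r) ^ 2 / r ^ 3) r := by
    have h := (((dm.const_mul 2).fun_div did hr0).const_sub 1).fun_add
      ((dq.fun_pow 2).fun_div (did.fun_pow 2) (pow_ne_zero 2 hr0))
    refine h.congr_deriv ?_
    field_simp
    push_cast
    ring
  have dlam : HasDerivAt (fun t => lamOf mg q t)
      (Real.exp (2 * lamOf mg q r) * (4 * π * r * rho r - mg r / r ^ 2 + (q r) ^ 2 / r ^ 3)) r := by
    have h := (dF.log hF0).fun_neg.div_const 2
    refine h.congr_deriv ?_
    rw [hE, hmg' r hr, div_eq_mul_inv _ (1 - 2 * mg r / r + (q r) ^ 2 / r ^ 2)]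
    generalize (1 - 2 * mg r / r + (q r) ^ 2 / r ^ 2)⁻¹ = E
    field_simp
    ring
  have dA := (dm.fun_add (((did.fun_pow 3).const_mul (4 * π)).fun_mul dp)).fun_sub
    ((dq.fun_pow 2).fun_div did hr0)
  have h := dA.fun_mul (dmu.fun_add dlam).exp
  rw [h.deriv, hmu' r hr, hTOV r hr, hmg' r hr]
  generalize Real.exp (2 * lamOf mg q r) = E
  generalize Real.exp (mu r + lamOf mg q r) = G
  have hpi := Real.pi_ne_zero
  field_simp
  push_cast
  ring
end
end

section
/- Final algebraic step in the thin-shell limit: let R > 0, M > 0 and Q ≥ 0 be real numbers with Q² < MR, and suppose D := 1 − 2M/R + Q²/R² satisfies D ≥ 0 and M − Q²/R = 2R√D(1 − √D). Then (3M − Q²/R)² = 4MR, and consequently √M = √R/3 + √(R/9 + Q²/(3R)). -/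
/-- **Final algebraic step in the thin-shell limit**: let `R > 0`, `M > 0`,
`Q ≥ 0` with `Q² < MR`, and suppose `D = 1 − 2M/R + Q²/R²` satisfies `D ≥ 0`
and `M − Q²/R = 2R√D(1 − √D)`. Then `(3M − Q²/R)² = 4MR` and consequently
`√M = √R/3 + √(R/9 + Q²/(3R))`. -/
theorem thin_shell_algebraic_step (R M Q : ℝ) (hR : 0 < R) (hM : 0 < M)
    (hQ : 0 ≤ Q) (hQM : Q ^ 2 < M * R)
    (hD : 0 ≤ 1 - 2 * M / R + Q ^ 2 / R ^ 2)
    (heq : M - Q ^ 2 / R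
      = 2 * R * Real.sqrt (1 - 2 * M / R + Q ^ 2 / R ^ 2)
          * (1 - Real.sqrt (1 - 2 * M / R + Q ^ 2 / R ^ 2))) :
    (3 * M - Q ^ 2 / R) ^ 2 = 4 * M * R ∧
    Real.sqrt M = Real.sqrt R / 3 + Real.sqrt (R / 9 + Q ^ 2 / (3 * R)) := by
  have hs := Real.sq_sqrt hD
  set s := Real.sqrt (1 - 2 * M / R + Q ^ 2 / R ^ 2) with hsdef
  have hq0 : 0 ≤ Q ^ 2 / R := by positivity
  have hqM : Q ^ 2 / R < M := by rwa [div_lt_iff₀ hR]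
  have hRs : R * s ^ 2 = R - 2 * M + Q ^ 2 / R := by
    rw [hs]
    field_simp
  have e3 : Q ^ 2 / (3 * R) = (Q ^ 2 / R) / 3 := by
    field_simp
  rw [e3]
  generalize Q ^ 2 / R = q at *
  have h2 : 2 * R * s = 2 * R - (3 * M - q) := by linear_combination 2 * hRs - heq
  have h1 : (3 * M - q) ^ 2 = 4 * M * R := by
    linear_combination (-(2 * R * s) - (2 * R - (3 * M - q))) * h2 + 4 * R * hRs
  refine ⟨h1, ?_⟩
  have hm := Real.sq_sqrt hM.le
  have hr := Real.sq_sqrt hR.le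
  have hm0 := Real.sqrt_pos.2 hM
  have hr0 := Real.sqrt_pos.2 hR
  generalize Real.sqrt M = m at *
  generalize Real.sqrt R = r at *
  have ht : 3 * M - q = 2 * m * r := by
    have : (3 * M - q) ^ 2 = (2 * m * r) ^ 2 := by
      rw [h1, ← hm, ← hr]; ring
    exact (pow_left_inj₀ (by linarith) (by positivity) two_ne_zero).1 this
  have hge : 0 ≤ 3 * m - 2 * r := by
    by_contra hneg
    push Not at hneg
    nlinarith [mul_pos hm0 (neg_pos.2 hneg)]
  have e : R / 9 + q / 3 = (m - r / 3) ^ 2 := by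
    rw [← hr]
    linear_combination (-1 / 3) * ht - hm
  rw [e, Real.sqrt_sq (by linarith)]
  ring
end
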